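/- The words 01 and 10 each have frequency 1/2 − √5/10 in the sequence T: the limit as x → ∞ of (1/x)·#{N < x : T(N) = 0 and T(N+1) = 1} equals 1/2 − √5/10, and the limit as x → ∞ of (1/x)·#{N < x : T(N) = 1 and T(N+1) = 0} equals 1/2 − √5/10. -/

import Mathlib

/-- The golden mean φ = (1+√5)/2. -/
noncomputable def phi : ℝ := (1 + Real.sqrt 5) / 2

/-- `d : ℤ → ℕ` is a base-phi expansion of `N`: finitely supported, digits at most 1,
no two consecutive digits equal 1, and `∑ d i * φ^i = N`. -/
def IsBasePhi (N : ℕ) (d : ℤ → ℕ) : Prop :=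
  {i : ℤ | d i ≠ 0}.Finite ∧ (∀ i, d i ≤ 1) ∧ (∀ i, d i * d (i + 1) = 0) ∧
    ∑' i : ℤ, (d i : ℝ) * phi ^ i = (N : ℝ)

/-- The Lucas numbers: L 0 = 2, L 1 = 1, L (n+2) = L (n+1) + L n. -/
def Lucas : ℕ → ℕ
  | 0 => 2
  | 1 => 1
  | n + 2 => Lucas (n + 1) + Lucas n

/-- The sum of the digits of a (finitely supported) digit function. -/
noncomputable def digitSum (d : ℤ → ℕ) : ℕ := ∑' i : ℤ, d i

/-! Adding a Lucas number changes base-phi expansions only at their ends, so `T` is built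
recursively over the Lucas numbers: on `[L₂ₙ₊₂, L₂ₙ₊₃]` it repeats `[0, L₂ₙ₊₁]`, and the open
interval `(L₂ₙ₊₃, L₂ₙ₊₄)` consists of a complement of `(L₂ₙ₊₁, L₂ₙ₊₂)`, a copy of `[0, L₂ₙ₋₁]`, and
another complement of `(L₂ₙ₊₁, L₂ₙ₊₂)`. Copies and complements preserve the places where
`T N = T (N + 1)`. Hence the numbers of such `N` below the Lucas numbers satisfy Fibonacci-like
recurrences and are Fibonacci numbers up to one, while `fib m` differs from `L m / √5` by a bounded
amount. Cutting an arbitrary `[0, x)` along the recursion accumulates a bounded error on each of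
`O(log x)` levels, so `T N = T (N + 1)` has frequency `1 / √5`. The words 01 and 10 alternate, hence
share the remaining frequency `1 - 1 / √5` equally. -/

/-! ### Lucas numbers and powers of the golden mean -/

lemma lucas_add_two (m : ℕ) : Lucas (m + 2) = Lucas (m + 1) + Lucas m := rfl

lemma two_le_lucas_even (n : ℕ) : 2 ≤ Lucas (2 * n) := by
  induction n with
  | zero => exact le_rfl
  | succ n ih => exact ih.trans (Nat.le_add_left _ _)

lemma two_pow_le_lucas_odd (n : ℕ) : 2 ^ n ≤ Lucas (2 * n + 1) := by
  induction n with
  | zero => exact le_rfl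
  | succ n ih =>
    have h₂ := lucas_add_two (2 * n)
    have h₃ : Lucas (2 * (n + 1) + 1) = Lucas (2 * n + 2) + Lucas (2 * n + 1) := rfl
    rw [h₃, pow_succ]
    omega

lemma coe_lucas_eq (m : ℕ) : (Lucas m : ℝ) = Real.goldenRatio ^ m + Real.goldenConj ^ m := by
  induction m using Nat.twoStepInduction with
  | zero => norm_num [Lucas]
  | one => simp [Lucas]
  | more m h₀ h₁ =>
    rw [lucas_add_two, Nat.cast_add, h₀, h₁, pow_add _ m 2, pow_add _ m 2,
      Real.goldenRatio_sq, Real.goldenConj_sq]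
    ring

lemma phi_ne_zero : phi ≠ 0 := Real.goldenRatio_ne_zero

lemma phi_zpow_eq (k : ℤ) : phi ^ k = phi ^ (k - 1) + phi ^ (k - 2) := by
  have phi_sq : phi ^ 2 = phi + 1 := Real.goldenRatio_sq
  rw [zpow_sub₀ phi_ne_zero, zpow_sub₀ phi_ne_zero, zpow_one, zpow_ofNat, phi_sq]
  have : phi + 1 ≠ 0 := phi_sq ▸ pow_ne_zero 2 phi_ne_zero
  field_simp [phi_ne_zero]
  linear_combination phi_sq

lemma goldenConj_pow_eq (m : ℕ) : Real.goldenConj ^ m = (-1) ^ m * phi ^ (-m : ℤ) := by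
  have h : phi⁻¹ = -Real.goldenConj := Real.inv_goldenRatio
  rw [← neg_neg Real.goldenConj, ← h, neg_pow, inv_pow, zpow_neg, zpow_natCast]

lemma coe_lucas_of_even {m : ℕ} (hm : Even m) :
    (Lucas m : ℝ) = phi ^ (m : ℤ) + phi ^ (-m : ℤ) := by
  rw [coe_lucas_eq, goldenConj_pow_eq, hm.neg_one_pow, one_mul, zpow_natCast]
  rfl

lemma coe_lucas_of_odd {m : ℕ} (hm : Odd m) :
    (Lucas m : ℝ) = phi ^ (m : ℤ) - phi ^ (-m : ℤ) := by
  rw [coe_lucas_eq, goldenConj_pow_eq, hm.neg_one_pow, neg_one_mul, zpow_natCast, ← sub_eq_add_neg]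
  rfl

/-- Splitting `[0, L₂ₙ₊₃]` as `[0, L₂ₙ₊₁]`, `(L₂ₙ₊₁, L₂ₙ₊₂)`, `[L₂ₙ₊₂, L₂ₙ₊₃]`, and the offsets
`(0, L₂ₙ₊₂)` as `(0, L₂ₙ)`, `[L₂ₙ, L₂ₙ₊₁]`, `(L₂ₙ₊₁, L₂ₙ₊₂)`. -/
theorem lucas_induction {P Q : ℕ → ℕ → Prop}
    (zero : P 0 0) (one : P 0 1)
    (mono : ∀ n k, k ≤ Lucas (2 * n + 1) → P n k → P (n + 1) k)
    (gap : ∀ n j, 0 < j → j < Lucas (2 * n) → Q n j → P (n + 1) (Lucas (2 * n + 1) + j))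
    (top : ∀ n k, k ≤ Lucas (2 * n + 1) → P n k → P (n + 1) (Lucas (2 * n + 2) + k))
    (gap_one : Q 0 1)
    (left : ∀ n j, 0 < j → j < Lucas (2 * n) → Q n j → Q (n + 1) j)
    (right : ∀ n j, 0 < j → j < Lucas (2 * n) → Q n j → Q (n + 1) (Lucas (2 * n + 1) + j))
    (middle : ∀ n k, k ≤ Lucas (2 * n + 1) → P n k → Q (n + 2) (Lucas (2 * n + 2) + k)) (n : ℕ) :
    (∀ k ≤ Lucas (2 * n + 1), P n k) ∧ ∀ j, 0 < j → j < Lucas (2 * n) → Q n j := by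
  suffices h : (∀ k ≤ Lucas (2 * n + 1), P n k) ∧ (∀ j, 0 < j → j < Lucas (2 * n) → Q n j) ∧
      ∀ j, 0 < j → j < Lucas (2 * n + 2) → Q (n + 1) j from ⟨h.1, h.2.1⟩
  induction n with
  | zero =>
    have hQ : ∀ j, 0 < j → j < 2 → Q 0 j := fun j h₀ h₁ => by
      obtain rfl : j = 1 := by omega
      exact gap_one
    refine ⟨fun k hk => ?_, hQ, fun j h₀ h₁ => ?_⟩
    · rcases Nat.le_one_iff_eq_zero_or_eq_one.1 hk with rfl | rfl <;> assumption
    · obtain rfl | rfl : j = 1 ∨ j = 2 := by simp only [Lucas] at h₁; omega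
      · exact left 0 1 one_pos one_lt_two gap_one
      · exact right 0 1 one_pos one_lt_two gap_one
  | succ n ih =>
    obtain ⟨hP, hQ, hQ'⟩ := ih
    have h₂ := lucas_add_two (2 * n)
    have h₃ : Lucas (2 * n + 3) = Lucas (2 * n + 2) + Lucas (2 * n + 1) := rfl
    have h₄ : Lucas (2 * n + 4) = Lucas (2 * n + 3) + Lucas (2 * n + 2) := rfl
    refine ⟨fun k (hk : k ≤ Lucas (2 * n + 3)) => ?_, hQ',
      fun j h₀ (hj : j < Lucas (2 * n + 4)) => ?_⟩
    · obtain hk₁ | ⟨hk₁, hk₂⟩ | hk₂ : k ≤ Lucas (2 * n + 1) ∨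
        (Lucas (2 * n + 1) < k ∧ k < Lucas (2 * n + 2)) ∨ Lucas (2 * n + 2) ≤ k := by omega
      · exact mono n k hk₁ (hP k hk₁)
      · obtain ⟨j, rfl⟩ := Nat.exists_eq_add_of_le hk₁.le
        exact gap n j (by omega) (by omega) (hQ j (by omega) (by omega))
      · obtain ⟨i, rfl⟩ := Nat.exists_eq_add_of_le hk₂
        exact top n i (by omega) (hP i (by omega))
    · obtain hj₁ | ⟨hj₁, hj₂⟩ | hj₂ : j < Lucas (2 * n + 2) ∨
        (Lucas (2 * n + 2) ≤ j ∧ j ≤ Lucas (2 * n + 3)) ∨ Lucas (2 * n + 3) < j := by omega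
      · exact left (n + 1) j h₀ hj₁ (hQ' j h₀ hj₁)
      · obtain ⟨k, rfl⟩ := Nat.exists_eq_add_of_le hj₁
        exact middle n k (by omega) (hP k (by omega))
      · obtain ⟨i, rfl⟩ := Nat.exists_eq_add_of_le hj₂.le
        exact right (n + 1) i (by omega) (show i < Lucas (2 * n + 2) by omega)
          (hQ' i (by omega) (by omega))

/-! ### Recursive structure of base-phi expansions -/

/-- `r` is the sum of `c` powers of `phi` whose exponents lie in `[lo, hi]`, no two of them
consecutive. For `r` a natural number this is a base-phi expansion with digit sum `c`. -/
def HasPhiExpansion (lo hi : ℤ) (c : ℕ) (r : ℝ) : Prop :=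
  ∃ S ⊆ Finset.Icc lo hi, (∀ i ∈ S, i + 1 ∉ S) ∧ S.card = c ∧ ∑ i ∈ S, phi ^ i = r

namespace HasPhiExpansion

variable {lo hi lo' hi' j : ℤ} {c : ℕ} {r s : ℝ}

lemma zero (lo hi : ℤ) : HasPhiExpansion lo hi 0 0 :=
  ⟨∅, by simp⟩

lemma zpow (j : ℤ) : HasPhiExpansion j j 1 (phi ^ j) :=
  ⟨{j}, by simp⟩

lemma mono (h : HasPhiExpansion lo hi c r) (hlo : lo' ≤ lo) (hhi : hi ≤ hi') :
    HasPhiExpansion lo' hi' c r :=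
  let ⟨S, hS, h⟩ := h
  ⟨S, hS.trans (Finset.Icc_subset_Icc hlo hhi), h⟩

lemma zpow_add (h : HasPhiExpansion lo hi c r) (hj : j + 2 ≤ lo ∨ hi + 2 ≤ j)
    (hlo : lo' ≤ lo ∧ lo' ≤ j) (hhi : hi ≤ hi' ∧ j ≤ hi') (hs : phi ^ j + r = s) :
    HasPhiExpansion lo' hi' (c + 1) s := by
  obtain ⟨S, hS, hsep, rfl, rfl⟩ := h
  have hmem : ∀ i ∈ S, lo ≤ i ∧ i ≤ hi := fun i hi => Finset.mem_Icc.1 (hS hi)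
  have hjS : j ∉ S := fun h => by have := hmem j h; omega
  refine ⟨insert j S, Finset.insert_subset (Finset.mem_Icc.2 ⟨hlo.2, hhi.2⟩)
    (hS.trans (Finset.Icc_subset_Icc hlo.1 hhi.1)), ?_, Finset.card_insert_of_notMem hjS,
    by rw [Finset.sum_insert hjS, hs]⟩
  simp only [Finset.mem_insert]
  rintro i (rfl | hi) (h | h)
  · omega
  · have := hmem _ h; omega
  · have := hmem _ hi; omega
  · exact hsep i hi h

lemma exists_isBasePhi {N : ℕ} (h : HasPhiExpansion lo hi c N) :
    ∃ d, IsBasePhi N d ∧ digitSum d = c := by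
  obtain ⟨S, -, hsep, rfl, hsum⟩ := h
  have hsupp : ∀ i ∉ S, (if i ∈ S then 1 else 0) = 0 := fun i hi => if_neg hi
  refine ⟨fun i => if i ∈ S then 1 else 0, ⟨?_, fun i => ?_, fun i => ?_, ?_⟩, ?_⟩
  · exact S.finite_toSet.subset fun i hi => by_contra fun hiS => hi (hsupp i hiS)
  · dsimp only
    split_ifs <;> simp
  · by_cases hi : i ∈ S
    · simp [hsep i hi]
    · simp [hi]
  · rw [tsum_eq_sum (s := S) fun i hi => by simp [hi], ← hsum]
    exact Finset.sum_congr rfl fun i hi => by simp [hi]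
  · rw [digitSum, tsum_eq_sum (s := S) hsupp, Finset.sum_ite_mem, Finset.inter_self,
      Finset.card_eq_sum_ones]

end HasPhiExpansion

/-- The expansion, with `c` digits, of what remains of `L₂ₙ₊₁ + j` after removing its outermost
digits, which for `0 < j < L₂ₙ` are at the exponents `2n + 1` and `-(2n + 2)`; note that
`L₂ₙ₊₁ = φ²ⁿ⁺¹ + φ⁻²ⁿ⁻² - φ⁻²ⁿ`. -/
def HasInnerExpansion (n c j : ℕ) : Prop :=
  HasPhiExpansion (-(2 * n) + 1) (2 * n - 1) c (j - phi ^ (-(2 * n) : ℤ))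

section Recurrences

variable {n c k j : ℕ}

lemma HasPhiExpansion.lucas_even_add (h : HasPhiExpansion (-(2 * n)) (2 * n) c k) :
    HasPhiExpansion (-(2 * (n + 1 : ℕ))) (2 * (n + 1 : ℕ)) (c + 2) (Lucas (2 * n + 2) + k : ℕ) := by
  refine (h.zpow_add (j := 2 * n + 2) (lo' := -(2 * n)) (hi' := 2 * n + 2)
    (by omega) (by omega) (by omega) rfl).zpow_add (j := -(2 * n + 2))
    (by omega) (by omega) (by omega) ?_
  have hL := coe_lucas_of_even (m := 2 * n + 2) (by simp [parity_simps])
  push_cast at hL ⊢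
  linarith

lemma HasInnerExpansion.lucas_odd_add (h : HasInnerExpansion n c j) :
    HasPhiExpansion (-(2 * (n + 1 : ℕ))) (2 * (n + 1 : ℕ)) (c + 2) (Lucas (2 * n + 1) + j : ℕ) := by
  refine (h.zpow_add (j := 2 * n + 1) (lo' := -(2 * n) + 1) (hi' := 2 * n + 1)
    (by omega) (by omega) (by omega) rfl).zpow_add (j := -(2 * n + 2))
    (by omega) (by omega) (by omega) ?_
  have hL := coe_lucas_of_odd (m := 2 * n + 1) (by simp [parity_simps])
  have hφ := phi_zpow_eq (-(2 * n))
  push_cast at hL ⊢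
  ring_nf at hL hφ ⊢
  linarith

lemma HasInnerExpansion.succ (h : HasInnerExpansion n c j) :
    HasInnerExpansion (n + 1) (c + 1) j := by
  refine h.zpow_add (j := -(2 * n + 1)) (by omega) (by omega) (by omega) ?_
  have hφ := phi_zpow_eq (-(2 * n))
  push_cast
  ring_nf at hφ ⊢
  linarith

lemma HasInnerExpansion.succ_lucas_odd_add (h : HasInnerExpansion n c j) :
    HasInnerExpansion (n + 1) (c + 1) (Lucas (2 * n + 1) + j) := by
  refine h.zpow_add (j := 2 * n + 1) (by omega) (by omega) (by omega) ?_
  have hL := coe_lucas_of_odd (m := 2 * n + 1) (by simp [parity_simps])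
  have hφ := phi_zpow_eq (-(2 * n))
  push_cast at hL ⊢
  ring_nf at hL hφ ⊢
  linarith

lemma HasPhiExpansion.inner_lucas_even_add (h : HasPhiExpansion (-(2 * n)) (2 * n) c k) :
    HasInnerExpansion (n + 2) (c + 2) (Lucas (2 * n + 2) + k) := by
  refine (h.zpow_add (j := 2 * n + 2) (lo' := -(2 * n)) (hi' := 2 * n + 2)
    (by omega) (by omega) (by omega) rfl).zpow_add (j := -(2 * n + 3))
    (by omega) (by omega) (by omega) ?_
  have hL := coe_lucas_of_even (m := 2 * n + 2) (by simp [parity_simps])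
  have hφ := phi_zpow_eq (-(2 * n + 2))
  push_cast at hL ⊢
  ring_nf at hL hφ ⊢
  linarith

lemma hasInnerExpansion_zero_one : HasInnerExpansion 0 0 1 := by
  simpa [HasInnerExpansion] using HasPhiExpansion.zero 1 (-1)

theorem exists_hasPhiExpansion (n : ℕ) :
    (∀ k ≤ Lucas (2 * n + 1), ∃ c, HasPhiExpansion (-(2 * n)) (2 * n) c k) ∧
      ∀ j, 0 < j → j < Lucas (2 * n) → ∃ c, HasInnerExpansion n c j :=
  lucas_induction (P := fun n k => ∃ c, HasPhiExpansion (-(2 * n)) (2 * n) c k)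
    (Q := fun n j => ∃ c, HasInnerExpansion n c j)
    ⟨0, by simpa using HasPhiExpansion.zero 0 0⟩
    ⟨1, by simpa using HasPhiExpansion.zpow 0⟩
    (fun n k _ ⟨c, h⟩ => ⟨c, h.mono (by omega) (by omega)⟩)
    (fun n j _ _ ⟨c, h⟩ => ⟨c + 2, h.lucas_odd_add⟩)
    (fun n k _ ⟨c, h⟩ => ⟨c + 2, h.lucas_even_add⟩)
    ⟨0, hasInnerExpansion_zero_one⟩
    (fun n j _ _ ⟨c, h⟩ => ⟨c + 1, h.succ⟩)
    (fun n j _ _ ⟨c, h⟩ => ⟨c + 1, h.succ_lucas_odd_add⟩)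
    (fun n k _ ⟨c, h⟩ => ⟨c + 2, h.inner_lucas_even_add⟩) n

end Recurrences

/-! ### The parity of the sum of digits -/

/-- `T` is the sum-of-digits function of base-phi expansions modulo 2. -/
def IsDigitSumParity (T : ℕ → ℕ) : Prop :=
  ∀ (N : ℕ) (d : ℤ → ℕ), IsBasePhi N d → T N = digitSum d % 2

namespace IsDigitSumParity

variable {T : ℕ → ℕ} {n c j k N : ℕ} {lo hi : ℤ} (hT : IsDigitSumParity T)

include hT

lemma eq_mod_two (h : HasPhiExpansion lo hi c N) : T N = c % 2 := by
  obtain ⟨d, hd, rfl⟩ := h.exists_isBasePhi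
  exact hT N d hd

lemma le_one (N : ℕ) : T N ≤ 1 := by
  have hN : N ≤ Lucas (2 * N + 1) := Nat.lt_two_pow_self.le.trans (two_pow_le_lucas_odd N)
  obtain ⟨c, hc⟩ := (exists_hasPhiExpansion N).1 N hN
  rw [hT.eq_mod_two hc]
  omega

lemma apply_zero : T 0 = 0 :=
  hT.eq_mod_two (c := 0) (by exact_mod_cast HasPhiExpansion.zero 0 0)

lemma apply_one : T 1 = 1 :=
  hT.eq_mod_two (c := 1) (by simpa using HasPhiExpansion.zpow 0)

lemma apply_two : T 2 = 0 :=
  hT.eq_mod_two hasInnerExpansion_zero_one.lucas_odd_add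

lemma apply_lucas_even_add (hk : k ≤ Lucas (2 * n + 1)) : T (Lucas (2 * n + 2) + k) = T k := by
  obtain ⟨c, hc⟩ := (exists_hasPhiExpansion n).1 k hk
  rw [hT.eq_mod_two hc, hT.eq_mod_two hc.lucas_even_add, Nat.add_mod_right]

lemma apply_lucas_odd_add (hj₀ : 0 < j) (hj : j < Lucas (2 * n)) :
    T (Lucas (2 * n + 3) + j) + T (Lucas (2 * n + 1) + j) = 1 := by
  obtain ⟨c, hc⟩ := (exists_hasPhiExpansion n).2 j hj₀ hj
  have h : T (Lucas (2 * n + 3) + j) = (c + 1 + 2) % 2 := hT.eq_mod_two hc.succ.lucas_odd_add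
  rw [h, hT.eq_mod_two hc.lucas_odd_add]
  omega

lemma apply_lucas_odd_add_lucas_odd_add (hj₀ : 0 < j) (hj : j < Lucas (2 * n)) :
    T (Lucas (2 * n + 3) + Lucas (2 * n + 1) + j) + T (Lucas (2 * n + 1) + j) = 1 := by
  obtain ⟨c, hc⟩ := (exists_hasPhiExpansion n).2 j hj₀ hj
  have h : T (Lucas (2 * n + 3) + (Lucas (2 * n + 1) + j)) = (c + 1 + 2) % 2 :=
    hT.eq_mod_two hc.succ_lucas_odd_add.lucas_odd_add
  rw [add_assoc, h, hT.eq_mod_two hc.lucas_odd_add]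
  omega

lemma apply_lucas_odd_add_lucas_even_add (hk : k ≤ Lucas (2 * n + 1)) :
    T (Lucas (2 * n + 5) + Lucas (2 * n + 2) + k) = T k := by
  obtain ⟨c, hc⟩ := (exists_hasPhiExpansion n).1 k hk
  have h : T (Lucas (2 * n + 5) + (Lucas (2 * n + 2) + k)) = (c + 2 + 2) % 2 :=
    hT.eq_mod_two hc.inner_lucas_even_add.lucas_odd_add
  rw [add_assoc, h, hT.eq_mod_two hc, Nat.add_mod_right, Nat.add_mod_right]

lemma apply_lucas_even (n : ℕ) : T (Lucas (2 * n + 2)) = 0 :=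
  (hT.apply_lucas_even_add (Nat.zero_le _)).trans hT.apply_zero

lemma apply_lucas_odd (n : ℕ) : T (Lucas (2 * n + 1)) = 1 := by
  induction n with
  | zero => exact hT.apply_one
  | succ n ih => exact (hT.apply_lucas_even_add le_rfl).trans ih

lemma apply_lucas_odd_add_lucas_even (n : ℕ) : T (Lucas (2 * n + 5) + Lucas (2 * n + 2)) = 0 :=
  (hT.apply_lucas_odd_add_lucas_even_add (Nat.zero_le _)).trans hT.apply_zero

lemma apply_lucas_odd_add_lucas_odd (n : ℕ) : T (Lucas (2 * n + 3) + Lucas (2 * n + 1)) = 1 := by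
  rcases n with _ | n
  · have h : T 5 + T 2 = 1 := hT.apply_lucas_odd_add (n := 0) one_pos one_lt_two
    exact add_right_cancel (h.trans (congrArg (1 + ·) hT.apply_two.symm))
  · have hL : Lucas (2 * n + 3) = Lucas (2 * n + 2) + Lucas (2 * n + 1) := rfl
    change T (Lucas (2 * n + 5) + Lucas (2 * n + 3)) = 1
    rw [hL, ← add_assoc, hT.apply_lucas_odd_add_lucas_even_add le_rfl, hT.apply_lucas_odd]

lemma apply_lucas_odd_add_one_eq (n : ℕ) :
    T (Lucas (2 * n + 1) + 1) = T (Lucas (2 * n + 2) - 1) := by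
  induction n with
  | zero => rfl
  | succ n ih =>
    have h₀ := two_le_lucas_even n
    have h₂ := lucas_add_two (2 * n)
    have h₄ : Lucas (2 * n + 4) = Lucas (2 * n + 3) + Lucas (2 * n + 2) := rfl
    have hfirst := hT.apply_lucas_odd_add (n := n) one_pos (by omega)
    have hlast := hT.apply_lucas_odd_add_lucas_odd_add (n := n) (j := Lucas (2 * n) - 1)
      (by omega) (by omega)
    rw [show Lucas (2 * n + 3) + Lucas (2 * n + 1) + (Lucas (2 * n) - 1) = Lucas (2 * n + 4) - 1 by
      omega, show Lucas (2 * n + 1) + (Lucas (2 * n) - 1) = Lucas (2 * n + 2) - 1 by omega] at hlast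
    change T (Lucas (2 * n + 3) + 1) = T (Lucas (2 * n + 4) - 1)
    omega

end IsDigitSumParity

/-! ### Counting the stays -/

/-- The number of `N < x` at which `T` stays constant, that is, `T N = T (N + 1)`. -/
def stayCount (T : ℕ → ℕ) (x : ℕ) : ℕ :=
  Nat.count (fun N => T N = T (N + 1)) x

section StayCount

variable {T : ℕ → ℕ} {a b k : ℕ}

lemma stayCount_zero (T : ℕ → ℕ) : stayCount T 0 = 0 := Nat.count_zero _

lemma stayCount_succ (T : ℕ → ℕ) (x : ℕ) :
    stayCount T (x + 1) = stayCount T x + if T x = T (x + 1) then 1 else 0 :=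
  Nat.count_succ _ x

lemma stayCount_add_of_iff
    (h : ∀ i < k, T (a + i) = T (a + i + 1) ↔ T (b + i) = T (b + i + 1)) :
    stayCount T (a + k) + stayCount T b = stayCount T (b + k) + stayCount T a := by
  have hcount : Nat.count (fun i => T (a + i) = T (a + i + 1)) k =
      Nat.count (fun i => T (b + i) = T (b + i + 1)) k := by
    simp only [Nat.count_eq_card_filter_range]
    exact congrArg _ (Finset.filter_congr fun i hi => h i (Finset.mem_range.1 hi))
  simp only [stayCount, Nat.count_add, hcount]
  omega

lemma stayCount_add_of_eq (h : ∀ i ≤ k, T (a + i) = T i) :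
    stayCount T (a + k) = stayCount T a + stayCount T k := by
  have := stayCount_add_of_iff (T := T) (a := a) (b := 0) (k := k) fun i hi => by
    rw [add_assoc, h i hi.le, h (i + 1) hi, zero_add]
  rw [zero_add, stayCount_zero] at this
  omega

lemma stayCount_add_of_add_eq_one (hk : 0 < k)
    (h : ∀ i, 0 < i → i ≤ k → T (a + i) + T (b + i) = 1) :
    stayCount T (a + k) + stayCount T (b + 1) = stayCount T (b + k) + stayCount T (a + 1) := by
  obtain ⟨k, rfl⟩ := Nat.exists_eq_add_of_lt hk
  have := stayCount_add_of_iff (T := T) (a := a + 1) (b := b + 1) (k := k) fun i hi => by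
    have h₁ := h (1 + i) (by omega) (by omega)
    have h₂ := h (1 + i + 1) (by omega) (by omega)
    simp only [← add_assoc] at h₁ h₂
    omega
  rwa [add_assoc a, add_assoc b, add_comm 1 k, ← zero_add k] at this

/-- The two boundary steps of a block contribute one stay each to exactly one of the block and its
complement, so the count is unchanged when the first and last interior values agree. -/
lemma stayCount_add_block {m : ℕ} (hm : 2 ≤ m)
    (h : ∀ i, 0 < i → i < m → T (a + i) + T (b + i) = 1)
    (ha : T a = 1) (hb : T b = 1) (ham : T (a + m) = 0) (hbm : T (b + m) = 0)
    (hends : T (b + 1) = T (b + m - 1)) :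
    stayCount T (a + m) + stayCount T b = stayCount T (b + m) + stayCount T a := by
  obtain ⟨k, rfl⟩ : ∃ k, m = k + 1 := ⟨m - 1, by omega⟩
  have hinner := stayCount_add_of_add_eq_one (T := T) (a := a) (b := b) (k := k) (by omega)
    fun i h₀ hi => h i h₀ (by omega)
  have hfirst := h 1 one_pos (by omega)
  have hlast := h k (by omega) k.lt_succ_self
  simp only [← add_assoc, Nat.add_sub_cancel] at ham hbm hends ⊢
  simp only [stayCount_succ, ha, hb, ham, hbm] at hinner ⊢
  split_ifs at hinner ⊢ <;> omega

end StayCount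

namespace IsDigitSumParity

variable {T : ℕ → ℕ} {n j k : ℕ} (hT : IsDigitSumParity T)

include hT

lemma stayCount_lucas_even_add (hk : k ≤ Lucas (2 * n + 1)) :
    stayCount T (Lucas (2 * n + 2) + k) = stayCount T (Lucas (2 * n + 2)) + stayCount T k :=
  stayCount_add_of_eq fun _ hi => hT.apply_lucas_even_add (hi.trans hk)

lemma stayCount_lucas_odd_add_lucas_even_add (hk : k ≤ Lucas (2 * n + 1)) :
    stayCount T (Lucas (2 * n + 5) + Lucas (2 * n + 2) + k) =
      stayCount T (Lucas (2 * n + 5) + Lucas (2 * n + 2)) + stayCount T k :=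
  stayCount_add_of_eq fun _ hi => hT.apply_lucas_odd_add_lucas_even_add (hi.trans hk)

lemma stayCount_lucas_odd_add (hj₀ : 0 < j) (hj : j < Lucas (2 * n)) :
    stayCount T (Lucas (2 * n + 3) + j) + stayCount T (Lucas (2 * n + 1) + 1) =
      stayCount T (Lucas (2 * n + 1) + j) + stayCount T (Lucas (2 * n + 3) + 1) :=
  stayCount_add_of_add_eq_one hj₀ fun _ h₀ hi => hT.apply_lucas_odd_add h₀ (hi.trans_lt hj)

lemma stayCount_lucas_odd_add_lucas_odd_add (hj₀ : 0 < j) (hj : j < Lucas (2 * n)) :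
    stayCount T (Lucas (2 * n + 3) + Lucas (2 * n + 1) + j) +
        stayCount T (Lucas (2 * n + 1) + 1) =
      stayCount T (Lucas (2 * n + 1) + j) +
        stayCount T (Lucas (2 * n + 3) + Lucas (2 * n + 1) + 1) :=
  stayCount_add_of_add_eq_one hj₀ fun _ h₀ hi =>
    hT.apply_lucas_odd_add_lucas_odd_add h₀ (hi.trans_lt hj)

lemma stayCount_lucas_odd_add_lucas_even (n : ℕ) :
    stayCount T (Lucas (2 * n + 5) + Lucas (2 * n + 2)) + stayCount T (Lucas (2 * n + 3)) =
      stayCount T (Lucas (2 * n + 4)) + stayCount T (Lucas (2 * n + 5)) :=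
  stayCount_add_block (two_le_lucas_even (n + 1))
    (fun _ h₀ hi => hT.apply_lucas_odd_add (n := n + 1) h₀ hi)
    (hT.apply_lucas_odd (n + 2)) (hT.apply_lucas_odd (n + 1)) (hT.apply_lucas_odd_add_lucas_even n)
    (hT.apply_lucas_even (n + 1)) (hT.apply_lucas_odd_add_one_eq (n + 1))

lemma stayCount_lucas_even_add_two (n : ℕ) :
    stayCount T (Lucas (2 * n + 4)) + stayCount T (Lucas (2 * n + 1)) =
      stayCount T (Lucas (2 * n + 2)) + stayCount T (Lucas (2 * n + 3) + Lucas (2 * n + 1)) := by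
  have hL : Lucas (2 * n + 4) = Lucas (2 * n + 3) + Lucas (2 * n + 1) + Lucas (2 * n) :=
    (add_assoc _ _ _).symm
  have hzero : T (Lucas (2 * n + 4)) = 0 := hT.apply_lucas_even (n + 1)
  rw [hL] at hzero ⊢
  exact stayCount_add_block (two_le_lucas_even n)
    (fun _ => hT.apply_lucas_odd_add_lucas_odd_add)
    (hT.apply_lucas_odd_add_lucas_odd n) (hT.apply_lucas_odd n) hzero
    (hT.apply_lucas_even n) (hT.apply_lucas_odd_add_one_eq n)

lemma stayCount_one : stayCount T 1 = 0 := by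
  simp [stayCount_succ, stayCount_zero, hT.apply_zero, hT.apply_one]

lemma stayCount_lucas_odd (n : ℕ) : stayCount T (Lucas (2 * n + 3)) =
    stayCount T (Lucas (2 * n + 2)) + stayCount T (Lucas (2 * n + 1)) :=
  hT.stayCount_lucas_even_add le_rfl

lemma stayCount_lucas_even (n : ℕ) : stayCount T (Lucas (2 * n + 4)) =
    stayCount T (Lucas (2 * n + 3)) + stayCount T (Lucas (2 * n + 2)) + 1 := by
  induction n with
  | zero =>
    have h₇ : stayCount T 7 + stayCount T 1 = stayCount T 3 + stayCount T 5 :=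
      hT.stayCount_lucas_even_add_two 0
    have h₅ : stayCount T 5 = stayCount T 4 + 1 := by
      have hT₄ : T 4 = 1 := hT.apply_lucas_odd 1
      have hT₅ : T 5 = 1 := hT.apply_lucas_odd_add_lucas_odd 0
      rw [stayCount_succ, if_pos (hT₄.trans hT₅.symm)]
    change stayCount T 7 = stayCount T 4 + stayCount T 3 + 1
    have := hT.stayCount_one
    omega
  | succ n ih =>
    have h₆ : stayCount T (Lucas (2 * n + 6)) + stayCount T (Lucas (2 * n + 3)) =
        stayCount T (Lucas (2 * n + 4)) + stayCount T (Lucas (2 * n + 5) + Lucas (2 * n + 3)) :=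
      hT.stayCount_lucas_even_add_two (n + 1)
    have h₅₃ : stayCount T (Lucas (2 * n + 5) + Lucas (2 * n + 3)) =
        stayCount T (Lucas (2 * n + 5) + Lucas (2 * n + 2)) + stayCount T (Lucas (2 * n + 1)) := by
      rw [← hT.stayCount_lucas_odd_add_lucas_even_add le_rfl, add_assoc]
      rfl
    have h₅₂ := hT.stayCount_lucas_odd_add_lucas_even n
    have h₃ := hT.stayCount_lucas_odd n
    change stayCount T (Lucas (2 * n + 6)) =
      stayCount T (Lucas (2 * n + 5)) + stayCount T (Lucas (2 * n + 4)) + 1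
    omega

theorem stayCount_lucas (n : ℕ) :
    stayCount T (Lucas (2 * n + 1)) + 1 = Nat.fib (2 * n + 1) ∧
      stayCount T (Lucas (2 * n + 2)) = Nat.fib (2 * n + 2) := by
  induction n with
  | zero =>
    have hT₃ : T 3 = 0 := hT.apply_lucas_even 0
    have h₁ := hT.stayCount_one
    have h₃ : stayCount T 3 = 1 := by
      simp [stayCount_succ T 2, stayCount_succ T 1, h₁, hT.apply_one, hT.apply_two, hT₃]
    exact ⟨congrArg (· + 1) h₁, h₃⟩
  | succ n ih =>
    have h₃ := hT.stayCount_lucas_odd n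
    have h₄ := hT.stayCount_lucas_even n
    have hfib₃ : Nat.fib (2 * n + 3) = Nat.fib (2 * n + 1) + Nat.fib (2 * n + 2) := Nat.fib_add_two
    have hfib₄ : Nat.fib (2 * n + 4) = Nat.fib (2 * n + 2) + Nat.fib (2 * n + 3) := Nat.fib_add_two
    change stayCount T (Lucas (2 * n + 3)) + 1 = Nat.fib (2 * n + 3) ∧
      stayCount T (Lucas (2 * n + 4)) = Nat.fib (2 * n + 4)
    omega

end IsDigitSumParity

/-! ### Discrepancy of the stays -/

/-- The excess of `stayCount T x` over its asymptotic value `x / √5`. -/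
noncomputable def stayDiscrepancy (T : ℕ → ℕ) (x : ℕ) : ℝ :=
  stayCount T x - x / √5

section StayDiscrepancy

variable {T : ℕ → ℕ} {a b c d : ℕ}

lemma stayDiscrepancy_add (h : stayCount T (a + b) = stayCount T a + stayCount T b) :
    stayDiscrepancy T (a + b) = stayDiscrepancy T a + stayDiscrepancy T b := by
  simp only [stayDiscrepancy, h, Nat.cast_add]
  ring

lemma stayDiscrepancy_add_eq_add
    (h : stayCount T a + stayCount T b = stayCount T c + stayCount T d) (hx : a + b = c + d) :
    stayDiscrepancy T a + stayDiscrepancy T b = stayDiscrepancy T c + stayDiscrepancy T d := by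
  have h' : (stayCount T a + stayCount T b : ℝ) = stayCount T c + stayCount T d := mod_cast h
  have hx' : (a + b : ℝ) = c + d := mod_cast hx
  simp only [stayDiscrepancy]
  linear_combination h' - hx' / √5

lemma abs_stayDiscrepancy_add_one_sub (T : ℕ → ℕ) (x : ℕ) :
    |stayDiscrepancy T (x + 1) - stayDiscrepancy T x| ≤ 1 := by
  have h₅ : 1 / √5 ≤ 1 := div_le_one_of_le₀ (Real.one_le_sqrt.2 (by norm_num)) (Real.sqrt_nonneg 5)
  have h₀ : 0 ≤ 1 / √5 := by positivity
  have hdiff : stayDiscrepancy T (x + 1) - stayDiscrepancy T x =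
      (if T x = T (x + 1) then 1 else 0) - 1 / √5 := by
    simp only [stayDiscrepancy, stayCount_succ, Nat.cast_add, Nat.cast_ite, Nat.cast_one,
      Nat.cast_zero]
    ring
  rw [hdiff, abs_le]
  split_ifs <;> constructor <;> linarith

lemma abs_stayDiscrepancy_le (T : ℕ → ℕ) (x : ℕ) : |stayDiscrepancy T x| ≤ x := by
  induction x with
  | zero => simp [stayDiscrepancy, stayCount_zero]
  | succ x ih =>
    push_cast
    linarith [abs_stayDiscrepancy_add_one_sub T x,
      abs_sub_abs_le_abs_sub (stayDiscrepancy T (x + 1)) (stayDiscrepancy T x)]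

end StayDiscrepancy

lemma abs_fib_sub_lucas_div_sqrt_five_le (m : ℕ) : |(Nat.fib m : ℝ) - Lucas m / √5| ≤ 1 := by
  have h₅ : 2 ≤ √5 := Real.le_sqrt_of_sq_le (by norm_num)
  have hconj : |Real.goldenConj| ≤ 1 :=
    abs_le.2 ⟨Real.neg_one_lt_goldenConj.le, Real.goldenConj_neg.le.trans zero_le_one⟩
  have hdiff : (Nat.fib m : ℝ) - Lucas m / √5 = -(2 / √5) * Real.goldenConj ^ m := by
    rw [Real.coe_fib_eq, coe_lucas_eq]
    ring
  rw [hdiff, abs_mul, abs_neg, abs_pow, abs_of_pos (by positivity)]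
  exact mul_le_one₀ ((div_le_one₀ (by positivity)).2 h₅) (by positivity)
    (pow_le_one₀ (abs_nonneg _) hconj)

namespace IsDigitSumParity

variable {T : ℕ → ℕ} {n j k : ℕ} (hT : IsDigitSumParity T)

include hT

lemma abs_stayDiscrepancy_lucas_odd (n : ℕ) : |stayDiscrepancy T (Lucas (2 * n + 1))| ≤ 2 := by
  have hfib : (stayCount T (Lucas (2 * n + 1)) : ℝ) + 1 = Nat.fib (2 * n + 1) :=
    mod_cast (hT.stayCount_lucas n).1
  have h := abs_le.1 (abs_fib_sub_lucas_div_sqrt_five_le (2 * n + 1))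
  rw [stayDiscrepancy, abs_le]
  constructor <;> linarith

lemma abs_stayDiscrepancy_lucas_even (n : ℕ) : |stayDiscrepancy T (Lucas (2 * n + 2))| ≤ 1 := by
  rw [stayDiscrepancy, (hT.stayCount_lucas n).2]
  exact abs_fib_sub_lucas_div_sqrt_five_le (2 * n + 2)

lemma abs_stayDiscrepancy_lucas_odd_add_lucas_odd (n : ℕ) :
    |stayDiscrepancy T (Lucas (2 * n + 3) + Lucas (2 * n + 1))| ≤ 4 := by
  have h := stayDiscrepancy_add_eq_add (hT.stayCount_lucas_even_add_two n) (by
    have h₂ := lucas_add_two (2 * n)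
    have h₄ : Lucas (2 * n + 4) = Lucas (2 * n + 3) + Lucas (2 * n + 2) := rfl
    omega)
  have h₁ := abs_le.1 (hT.abs_stayDiscrepancy_lucas_odd n)
  have h₂ := abs_le.1 (hT.abs_stayDiscrepancy_lucas_even n)
  have h₄ : _ ∧ stayDiscrepancy T (Lucas (2 * n + 4)) ≤ 1 :=
    abs_le.1 (hT.abs_stayDiscrepancy_lucas_even (n + 1))
  exact abs_le.2 ⟨by linarith, by linarith⟩

lemma abs_stayDiscrepancy_lucas_odd_add_lucas_even (n : ℕ) :
    |stayDiscrepancy T (Lucas (2 * n + 5) + Lucas (2 * n + 2))| ≤ 5 := by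
  have h := stayDiscrepancy_add_eq_add (hT.stayCount_lucas_odd_add_lucas_even n) (by
    have h₄ : Lucas (2 * n + 4) = Lucas (2 * n + 3) + Lucas (2 * n + 2) := rfl
    omega)
  have h₃ : _ ∧ stayDiscrepancy T (Lucas (2 * n + 3)) ≤ 2 :=
    abs_le.1 (hT.abs_stayDiscrepancy_lucas_odd (n + 1))
  have h₄ : _ ∧ stayDiscrepancy T (Lucas (2 * n + 4)) ≤ 1 :=
    abs_le.1 (hT.abs_stayDiscrepancy_lucas_even (n + 1))
  have h₅ : _ ∧ stayDiscrepancy T (Lucas (2 * n + 5)) ≤ 2 :=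
    abs_le.1 (hT.abs_stayDiscrepancy_lucas_odd (n + 2))
  exact abs_le.2 ⟨by linarith, by linarith⟩

lemma abs_stayDiscrepancy_lucas_even_add_le (hk : k ≤ Lucas (2 * n + 1)) :
    |stayDiscrepancy T (Lucas (2 * n + 2) + k)| ≤ |stayDiscrepancy T k| + 1 := by
  rw [stayDiscrepancy_add (hT.stayCount_lucas_even_add hk), add_comm]
  exact (abs_add_le _ _).trans (add_le_add_right (hT.abs_stayDiscrepancy_lucas_even n) _)

lemma abs_stayDiscrepancy_lucas_odd_add_lucas_even_add_le (hk : k ≤ Lucas (2 * n + 1)) :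
    |stayDiscrepancy T (Lucas (2 * n + 5) + Lucas (2 * n + 2) + k)| ≤
      |stayDiscrepancy T k| + 5 := by
  rw [stayDiscrepancy_add (hT.stayCount_lucas_odd_add_lucas_even_add hk), add_comm]
  exact (abs_add_le _ _).trans
    (add_le_add_right (hT.abs_stayDiscrepancy_lucas_odd_add_lucas_even n) _)

lemma abs_stayDiscrepancy_lucas_odd_add_le (hj₀ : 0 < j) (hj : j < Lucas (2 * n)) :
    |stayDiscrepancy T (Lucas (2 * n + 3) + j)| ≤
      |stayDiscrepancy T (Lucas (2 * n + 1) + j)| + 6 := by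
  have h := stayDiscrepancy_add_eq_add (hT.stayCount_lucas_odd_add hj₀ hj) (by omega)
  have h₁ := abs_le.1 (hT.abs_stayDiscrepancy_lucas_odd n)
  have h₁' := abs_le.1 (abs_stayDiscrepancy_add_one_sub T (Lucas (2 * n + 1)))
  have h₃ : _ ∧ stayDiscrepancy T (Lucas (2 * n + 3)) ≤ 2 :=
    abs_le.1 (hT.abs_stayDiscrepancy_lucas_odd (n + 1))
  have h₃' := abs_le.1 (abs_stayDiscrepancy_add_one_sub T (Lucas (2 * n + 3)))
  have hj' := abs_le.1 (le_refl |stayDiscrepancy T (Lucas (2 * n + 1) + j)|)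
  exact abs_le.2 ⟨by linarith, by linarith⟩

lemma abs_stayDiscrepancy_lucas_odd_add_lucas_odd_add_le
    (hj₀ : 0 < j) (hj : j < Lucas (2 * n)) :
    |stayDiscrepancy T (Lucas (2 * n + 3) + Lucas (2 * n + 1) + j)| ≤
      |stayDiscrepancy T (Lucas (2 * n + 1) + j)| + 8 := by
  have h := stayDiscrepancy_add_eq_add (hT.stayCount_lucas_odd_add_lucas_odd_add hj₀ hj) (by omega)
  have h₁ := abs_le.1 (hT.abs_stayDiscrepancy_lucas_odd n)
  have h₁' := abs_le.1 (abs_stayDiscrepancy_add_one_sub T (Lucas (2 * n + 1)))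
  have h₃ := abs_le.1 (hT.abs_stayDiscrepancy_lucas_odd_add_lucas_odd n)
  have h₃' := abs_le.1
    (abs_stayDiscrepancy_add_one_sub T (Lucas (2 * n + 3) + Lucas (2 * n + 1)))
  have hj' := abs_le.1 (le_refl |stayDiscrepancy T (Lucas (2 * n + 1) + j)|)
  exact abs_le.2 ⟨by linarith, by linarith⟩

theorem abs_stayDiscrepancy_le_of_le_lucas (hk : k ≤ Lucas (2 * n + 1)) :
    |stayDiscrepancy T k| ≤ 8 * n + 2 := by
  refine (lucas_induction (P := fun n k => |stayDiscrepancy T k| ≤ 8 * n + 2)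
    (Q := fun n j => |stayDiscrepancy T (Lucas (2 * n + 1) + j)| ≤ 8 * n + 2)
    ?_ ?_ (fun n k _ h => ?_) (fun n j _ _ h => ?_) (fun n k hk h => ?_) ?_
    (fun n j h₀ hj h => ?_) (fun n j h₀ hj h => ?_) (fun n k hk h => ?_) n).1 k hk
  · exact (abs_stayDiscrepancy_le T 0).trans (by norm_num)
  · exact (abs_stayDiscrepancy_le T 1).trans (by norm_num)
  · push_cast
    linarith
  · push_cast
    linarith
  · push_cast
    linarith [hT.abs_stayDiscrepancy_lucas_even_add_le hk]
  · exact (abs_stayDiscrepancy_le T 2).trans (by norm_num)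
  · refine (hT.abs_stayDiscrepancy_lucas_odd_add_le h₀ hj).trans ?_
    push_cast
    linarith
  · rw [← add_assoc]
    refine (hT.abs_stayDiscrepancy_lucas_odd_add_lucas_odd_add_le h₀ hj).trans ?_
    push_cast
    linarith
  · rw [← add_assoc]
    refine (hT.abs_stayDiscrepancy_lucas_odd_add_lucas_even_add_le hk).trans ?_
    push_cast
    linarith

theorem abs_stayDiscrepancy_le_log (x : ℕ) : |stayDiscrepancy T x| ≤ 8 * Nat.log 2 x + 10 := by
  have hx : x ≤ Lucas (2 * (Nat.log 2 x + 1) + 1) :=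
    (Nat.lt_pow_succ_log_self one_lt_two x).le.trans (two_pow_le_lucas_odd _)
  refine (hT.abs_stayDiscrepancy_le_of_le_lucas hx).trans_eq ?_
  push_cast
  ring

end IsDigitSumParity

/-! ### Frequencies -/

lemma tendsto_div_of_abs_le_log {f : ℕ → ℝ} {A B : ℝ} (hf : ∀ x, |f x| ≤ A * Nat.log 2 x + B) :
    Filter.Tendsto (fun x : ℕ => f x / x) Filter.atTop (nhds 0) := by
  have hlog : (fun x : ℕ => (Nat.log 2 x : ℝ)) =o[Filter.atTop] fun x : ℕ => (x : ℝ) := by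
    have h : (fun x : ℕ => Real.logb 2 x) =o[Filter.atTop] fun x : ℕ => (x : ℝ) := by
      simp only [Real.logb, div_eq_inv_mul]
      exact (Real.isLittleO_log_id_atTop.comp_tendsto tendsto_natCast_atTop_atTop).const_mul_left _
    refine (Asymptotics.IsBigO.of_norm_le fun x => ?_).trans_isLittleO h
    rw [Real.norm_natCast]
    exact_mod_cast Real.natLog_le_logb x 2
  have hconst : (fun _ : ℕ => B) =o[Filter.atTop] fun x : ℕ => (x : ℝ) :=
    Asymptotics.isLittleO_const_left.2 (.inr (tendsto_norm_atTop_atTop.comp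
      tendsto_natCast_atTop_atTop))
  exact ((Asymptotics.IsBigO.of_norm_le hf).trans_isLittleO
    ((hlog.const_mul_left A).add hconst)).tendsto_div_nhds_zero

lemma IsDigitSumParity.tendsto_stayCount_div {T : ℕ → ℕ} (hT : IsDigitSumParity T) :
    Filter.Tendsto (fun x : ℕ => (stayCount T x : ℝ) / x) Filter.atTop (nhds (1 / √5)) := by
  have h := (tendsto_div_of_abs_le_log hT.abs_stayDiscrepancy_le_log).add_const (1 / √5)
  rw [zero_add] at h
  refine h.congr' ?_
  filter_upwards [Filter.eventually_gt_atTop 0] with x hx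
  have : (x : ℝ) ≠ 0 := mod_cast hx.ne'
  rw [stayDiscrepancy]
  field_simp
  ring

/-- The number of `N < x` at which the two-letter word `ab` occurs in the sequence `T`. -/
def wordCount (T : ℕ → ℕ) (a b x : ℕ) : ℕ :=
  ((Finset.range x).filter fun N => T N = a ∧ T (N + 1) = b).card

section WordCount

variable {T : ℕ → ℕ}

lemma wordCount_zero (T : ℕ → ℕ) (a b : ℕ) : wordCount T a b 0 = 0 := rfl

lemma wordCount_succ (T : ℕ → ℕ) (a b x : ℕ) :
    wordCount T a b (x + 1) = wordCount T a b x + if T x = a ∧ T (x + 1) = b then 1 else 0 := by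
  simp only [wordCount, Finset.card_filter, Finset.sum_range_succ]

lemma wordCount_add_wordCount_add_stayCount (hT : ∀ N, T N ≤ 1) (x : ℕ) :
    wordCount T 0 1 x + wordCount T 1 0 x + stayCount T x = x := by
  induction x with
  | zero => simp only [wordCount_zero, stayCount_zero]
  | succ x ih =>
    have h₀ := hT x
    have h₁ := hT (x + 1)
    rw [wordCount_succ, wordCount_succ, stayCount_succ]
    split_ifs <;> omega

lemma wordCount_zero_one_add (hT : ∀ N, T N ≤ 1) (x : ℕ) :
    wordCount T 0 1 x + T 0 = wordCount T 1 0 x + T x := by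
  induction x with
  | zero => simp only [wordCount_zero]
  | succ x ih =>
    have h₀ := hT x
    have h₁ := hT (x + 1)
    rw [wordCount_succ, wordCount_succ]
    split_ifs <;> omega

/-- The words 01 and 10 alternate, so each accounts for half of the changes of `T`. -/
lemma abs_two_mul_wordCount_add_stayCount_sub_le (hT : ∀ N, T N ≤ 1) (x : ℕ) :
    |(2 * wordCount T 0 1 x + stayCount T x - x : ℝ)| ≤ 1 ∧
      |(2 * wordCount T 1 0 x + stayCount T x - x : ℝ)| ≤ 1 := by
  have hsum := wordCount_add_wordCount_add_stayCount hT x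
  have halt := wordCount_zero_one_add hT x
  have h₀ := hT 0
  have hx := hT x
  constructor <;> rw [abs_le] <;> constructor <;> rify at * <;> linarith

end WordCount

lemma tendsto_div_of_abs_two_mul_add_sub_le {f g : ℕ → ℝ} {B s : ℝ}
    (hfg : ∀ x : ℕ, |2 * f x + g x - x| ≤ B)
    (hg : Filter.Tendsto (fun x : ℕ => g x / x) Filter.atTop (nhds s)) :
    Filter.Tendsto (fun x : ℕ => f x / x) Filter.atTop (nhds ((1 - s) / 2)) := by
  have herr : Filter.Tendsto (fun x : ℕ => (2 * f x + g x - x) / x) Filter.atTop (nhds 0) :=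
    tendsto_div_of_abs_le_log (A := 0) (B := B) fun x => by simpa using hfg x
  have h := ((hg.const_sub 1).add herr).div_const 2
  rw [add_zero] at h
  refine h.congr' ?_
  filter_upwards [Filter.eventually_gt_atTop 0] with x hx
  have : (x : ℝ) ≠ 0 := mod_cast hx.ne'
  field_simp
  ring

/-- The words 01 and 10 each have frequency 1/2 − √5/10 in the sequence `T`. -/
theorem freq_01_10 (T : ℕ → ℕ)
    (hT : ∀ (N : ℕ) (d : ℤ → ℕ), IsBasePhi N d → T N = digitSum d % 2) :
    Filter.Tendsto
      (fun x : ℕ => (((Finset.range x).filter fun N => T N = 0 ∧ T (N + 1) = 1).card : ℝ) / x)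
      Filter.atTop (nhds (1 / 2 - Real.sqrt 5 / 10)) ∧
    Filter.Tendsto
      (fun x : ℕ => (((Finset.range x).filter fun N => T N = 1 ∧ T (N + 1) = 0).card : ℝ) / x)
      Filter.atTop (nhds (1 / 2 - Real.sqrt 5 / 10)) := by
  have hS := IsDigitSumParity.tendsto_stayCount_div hT
  have hcount := abs_two_mul_wordCount_add_stayCount_sub_le (IsDigitSumParity.le_one hT)
  have hlim : 1 / 2 - √5 / 10 = (1 - 1 / √5) / 2 := by
    have h₅ : √5 * √5 = 5 := Real.mul_self_sqrt (by norm_num)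
    field_simp
    linear_combination -2 * h₅
  rw [hlim]
  exact ⟨tendsto_div_of_abs_two_mul_add_sub_le (fun x => (hcount x).1) hS,
    tendsto_div_of_abs_two_mul_add_sub_le (fun x => (hcount x).2) hS⟩
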